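/- Let p : V → M be a local isometry of metric spaces, let x̄ ∈ V, and let C > 0 be such that the closed ball of radius r centered at x̄ in V is a complete metric space for every r < C. Let σ : Δ^k → M be a Lipschitz map with Lip(σ) < C/√2, and let y ∈ Δ^k be a point with σ(y) = p(x̄). Then there exists a unique continuous map σ̃ : Δ^k → V with p ∘ σ̃ = σ and σ̃(y) = x̄; moreover σ̃(Δ^k) ⊆ B(x̄, C) and Lip(σ̃) = Lip(σ). -/

import Mathlib

/-!
A lift `Γ` of an `L`-Lipschitz path along a local isometry is `L`-Lipschitz wherever it is defined,
because being Lipschitz with a given constant is a local condition on a convex set. If the path is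
defined on `[0, T]`, its partial lifts from `v` therefore stay in the closed ball of radius `L * T`
around `v`, and completeness of this ball makes the endpoints of the partial lifts converge as the
time of definition increases. A local inverse of `p` at the limit prolongs the lift, so the whole
path lifts.

The segments from `y` to the points `z` of a convex set are mapped by a `K`-Lipschitz `σ` to
`K * dist y z`-Lipschitz paths. By the homotopy lifting property their lifts depend continuously on
`z`, and the endpoints of these lifts form the lift of `σ`.
-/

open scoped NNReal

/-- A map between metric spaces is a local isometry if every point has an open
neighbourhood `U` with `p '' U` open such that `p` restricted to `U` is a
distance-preserving bijection onto `p '' U`. -/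
def IsLocalIsometry {V M : Type*} [MetricSpace V] [MetricSpace M] (p : V → M) : Prop :=
  ∀ v : V, ∃ U : Set V, IsOpen U ∧ v ∈ U ∧ IsOpen (p '' U) ∧ Set.InjOn p U ∧
    ∀ a ∈ U, ∀ b ∈ U, dist (p a) (p b) = dist a b

/-- The standard `k`-simplex `Δ^k ⊆ ℝ^{k+1}`, with the Euclidean metric. -/
def stdSimplexE (k : ℕ) : Set (EuclideanSpace ℝ (Fin (k + 1))) :=
  {x | (∀ i, 0 ≤ x i) ∧ ∑ i, x i = 1}

open Set Filter Metric
open scoped Topology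

section LocalToGlobal

open scoped unitInterval

variable {α : Type*} [PseudoMetricSpace α]

lemma dist_zero_one_le_of_forall_eventually_dist_le {f : I → α} {c : ℝ} (hf : Continuous f)
    (hloc : ∀ t, ∀ᶠ u in 𝓝[>] t, dist (f t) (f u) ≤ c * (u - t)) : dist (f 0) (f 1) ≤ c := by
  set A : Set I := {t | dist (f 0) (f t) ≤ c * t}
  have hA : IsClosed A := isClosed_le (by fun_prop) (by fun_prop)
  have hIcc : Icc 0 1 ⊆ A := by
    refine (hA.inter isClosed_Icc).Icc_subset_of_forall_mem_nhdsWithin (by simp [A]) ?_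
    rintro t ⟨ht : dist (f 0) (f t) ≤ c * t, -⟩
    filter_upwards [hloc t] with u hu
    calc dist (f 0) (f u) ≤ dist (f 0) (f t) + dist (f t) (f u) := dist_triangle ..
      _ ≤ c * t + c * (u - t) := add_le_add ht hu
      _ = c * u := by ring
  simpa [A] using hIcc (right_mem_Icc.2 zero_le_one)

variable {E : Type*} [SeminormedAddCommGroup E] [NormedSpace ℝ E] {s : Set E}

/-- The straight-line contraction of a convex set onto its point `y`, as a homotopy from the
constant map to the identity; `t ↦ segmentContraction hs y (t, z)` is the segment from `y` to
`z`. -/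
noncomputable def segmentContraction (hs : Convex ℝ s) (y : s) :
    (ContinuousMap.const s y).HomotopyRel (.id s) {y} where
  toFun q := ⟨AffineMap.lineMap (y : E) (q.2 : E) (q.1 : ℝ), hs.lineMap_mem y.2 q.2.2 q.1.2⟩
  continuous_toFun := by fun_prop
  map_zero_left z := by simp
  map_one_left z := by simp
  prop' t z hz := by obtain rfl : z = y := hz; simp

lemma dist_segmentContraction (hs : Convex ℝ s) (y z : s) (t u : I) :
    dist (segmentContraction hs y (t, z)) (segmentContraction hs y (u, z)) =
      dist t u * dist y z :=
  dist_lineMap_lineMap (y : E) (z : E) (t : ℝ) (u : ℝ)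

lemma lipschitzWith_of_forall_eventually_dist_le (hs : Convex ℝ s) {f : s → α} {K : ℝ≥0}
    (hloc : ∀ x, ∀ᶠ z in 𝓝 x, dist (f x) (f z) ≤ K * dist x z) : LipschitzWith K f := by
  have hf : Continuous f := continuous_iff_continuousAt.2 fun x ↦ by
    have hlim : Tendsto (fun z ↦ K * dist x z) (𝓝 x) (𝓝 0) :=
      Continuous.tendsto' (by fun_prop) _ _ (by simp)
    refine tendsto_iff_dist_tendsto_zero.2
      (squeeze_zero' (.of_forall fun _ ↦ dist_nonneg) ?_ hlim)
    simpa only [dist_comm (f x)] using hloc x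
  refine .of_dist_le_mul fun a b ↦ ?_
  set w : I → s := fun t ↦ segmentContraction hs a (t, b)
  have hw : Continuous w := by fun_prop
  have hw_loc (t : I) : ∀ᶠ u in 𝓝[>] t, dist (f (w t)) (f (w u)) ≤ K * dist a b * (u - t) := by
    filter_upwards [(hw.tendsto t).mono_left nhdsWithin_le_nhds (hloc (w t)),
      self_mem_nhdsWithin] with u hu (htu : t < u)
    calc dist (f (w t)) (f (w u)) ≤ K * dist (w t) (w u) := hu
      _ = K * dist a b * dist u t := by rw [dist_segmentContraction, dist_comm t u]; ring
      _ = K * dist a b * (u - t) := by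
        rw [Subtype.dist_eq u t, Real.dist_eq,
          abs_of_pos (sub_pos.2 (Subtype.coe_lt_coe.2 htu))]
  simpa [w] using dist_zero_one_le_of_forall_eventually_dist_le (hf.comp hw) hw_loc

end LocalToGlobal

/-- `Γ` is a partial lift, defined on `[0, t]` and starting at `v`, of the path `γ` along `p`.
Outside `[0, t]` the values of `Γ` are irrelevant. -/
structure IsPathLift {V M : Type*} [TopologicalSpace V] (p : V → M) (γ : ℝ → M) (v : V) (t : ℝ)
    (Γ : ℝ → V) : Prop where
  continuousOn : ContinuousOn Γ (Icc 0 t)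
  map_zero : Γ 0 = v
  eqOn_comp : EqOn (p ∘ Γ) γ (Icc 0 t)

section LocalHomeomorph

open scoped unitInterval

variable {V M : Type*} [TopologicalSpace V] {p : V → M} {γ : ℝ → M} {v : V}

namespace IsPathLift

variable {s t : ℝ} {Γ Γ' : ℝ → V}

lemma mono (h : IsPathLift p γ v t Γ) (hst : s ≤ t) : IsPathLift p γ v s Γ where
  continuousOn := h.continuousOn.mono (Icc_subset_Icc_right hst)
  map_zero := h.map_zero
  eqOn_comp := h.eqOn_comp.mono (Icc_subset_Icc_right hst)

lemma eqOn (h : IsPathLift p γ v t Γ) (h' : IsPathLift p γ v t Γ') (hsep : IsSeparatedMap p)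
    (hinj : IsLocallyInjective p) : EqOn Γ Γ' (Icc 0 t) := by
  intro u hu
  exact hsep.eqOn_of_comp_eqOn hinj isPreconnected_Icc h.continuousOn h'.continuousOn
    (h.eqOn_comp.trans h'.eqOn_comp.symm) (left_mem_Icc.2 (hu.1.trans hu.2))
    (h.map_zero.trans h'.map_zero.symm) hu

variable [TopologicalSpace M]

lemma exists_extend {e : OpenPartialHomeomorph V M} (h : IsPathLift e γ v s Γ) (hs : 0 ≤ s)
    (hst : s ≤ t) (hsource : Γ s ∈ e.source) (hγ : ContinuousOn γ (Icc s t))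
    (htarget : MapsTo γ (Icc s t) e.target) : ∃ Γ', IsPathLift e γ v t Γ' := by
  have hΓs : e.symm (γ s) = Γ s := by
    rw [← h.eqOn_comp (right_mem_Icc.2 hs)]
    exact e.left_inv hsource
  set Γ' : ℝ → V := fun u ↦ if u ≤ s then Γ u else e.symm (γ u)
  have hleft : EqOn Γ' Γ (Icc 0 s) := fun u hu ↦ if_pos hu.2
  have hright : EqOn Γ' (e.symm ∘ γ) (Icc s t) := fun u hu ↦ by
    rcases hu.1.eq_or_lt with rfl | hsu
    · simp [Γ', hΓs]
    · exact if_neg hsu.not_ge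
  refine ⟨Γ', ?_, ?_, ?_⟩
  · rw [← Icc_union_Icc_eq_Icc hs hst]
    exact (h.continuousOn.congr hleft).union_of_isClosed
      ((e.continuousOn_symm.comp hγ htarget).congr hright) isClosed_Icc isClosed_Icc
  · rw [hleft (left_mem_Icc.2 hs), h.map_zero]
  · rw [← Icc_union_Icc_eq_Icc hs hst]
    refine EqOn.union (fun u hu ↦ ?_) (fun u hu ↦ ?_)
    · rw [← h.eqOn_comp hu, Function.comp_apply, hleft hu, Function.comp_apply]
    · rw [Function.comp_apply, hright hu]
      exact e.right_inv (htarget hu)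

end IsPathLift

variable [TopologicalSpace M]

lemma eventually_exists_isPathLift_of_tendsto_endpoint [T2Space M] (hp : IsLocalHomeomorph p)
    (hγ : Continuous γ) {S : Set ℝ} (hS : S ⊆ Ici 0) {Γ : ℝ → ℝ → V}
    (hΓ : ∀ t ∈ S, IsPathLift p γ v t (Γ t)) {x : ℝ} (hx : x ∈ closure S) {w : V}
    (hlim : Tendsto (fun t ↦ Γ t t) (𝓝[S] x) (𝓝 w)) :
    ∀ᶠ u in 𝓝 x, ∃ Γ', IsPathLift p γ v u Γ' := by
  have : (𝓝[S] x).NeBot := mem_closure_iff_nhdsWithin_neBot.1 hx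
  have hw : p w = γ x := by
    refine tendsto_nhds_unique ((hp.continuous.tendsto w).comp hlim)
      (((hγ.tendsto x).mono_left nhdsWithin_le_nhds).congr' ?_)
    filter_upwards [self_mem_nhdsWithin] with t ht
    exact ((hΓ t ht).eqOn_comp (right_mem_Icc.2 (hS ht))).symm
  obtain ⟨e, hwe, rfl⟩ := hp w
  have hγx : γ ⁻¹' e.target ∈ 𝓝 x :=
    hγ.continuousAt (e.open_target.mem_nhds (hw ▸ e.map_source hwe))
  obtain ⟨ε, hε, hball⟩ := Metric.mem_nhds_iff.1 hγx
  have hnear : ∀ᶠ t in 𝓝[S] x, t ∈ S ∧ Γ t t ∈ e.source ∧ t ∈ ball x ε := by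
    filter_upwards [self_mem_nhdsWithin, hlim (e.open_source.mem_nhds hwe),
      mem_nhdsWithin_of_mem_nhds (ball_mem_nhds x hε)] with t htS hsource htx
    exact ⟨htS, hsource, htx⟩
  obtain ⟨t, htS, hsource, htx⟩ := hnear.exists
  filter_upwards [ball_mem_nhds x hε] with u hu
  rcases le_total u t with hut | htu
  · exact ⟨Γ t, (hΓ t htS).mono hut⟩
  · have hIcc : Icc t u ⊆ ball x ε := (convex_ball x ε).ordConnected.out htx hu
    exact (hΓ t htS).exists_extend (hS htS) htu hsource hγ.continuousOn
      fun r hr ↦ hball (hIcc hr)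

lemma exists_lift_of_homotopyRel_const {A : Type*} [TopologicalSpace A]
    (hp : IsLocalHomeomorph p) (hsep : IsSeparatedMap p) {a₀ : A}
    (H : (ContinuousMap.const A a₀).HomotopyRel (.id A) {a₀}) (f : C(A, M))
    (hpath : ∀ a, ∃ Γ : C(I, V), Γ 0 = v ∧ ∀ t, p (Γ t) = f (H (t, a))) :
    ∃ F : C(A, V), F a₀ = v ∧ ∀ a, p (F a) = f a := by
  choose Γ hΓ_zero hΓ_lift using hpath
  have hΓ : Continuous fun q : I × A ↦ Γ q.2 q.1 :=
    hp.continuous_lift hsep (f.comp ⟨H, map_continuous H⟩) (funext fun q ↦ hΓ_lift q.2 q.1)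
      (by simpa only [hΓ_zero] using continuous_const) fun a ↦ (Γ a).continuous
  refine ⟨⟨fun a ↦ Γ a 1, hΓ.comp (.prodMk_right 1)⟩, ?_, fun a ↦ ?_⟩
  · have hconst (t u : I) : p (Γ a₀ t) = p (Γ a₀ u) := by
      rw [hΓ_lift, hΓ_lift, H.eq_fst t rfl, H.eq_fst u rfl]
    exact (hsep.const_of_comp hp.isLocallyInjective (Γ a₀).continuous hconst 1 0).trans
      (hΓ_zero a₀)
  · simpa using hΓ_lift a 1

end LocalHomeomorph

lemma exists_tendsto_nhdsWithin_of_uniformContinuousOn {α β : Type*} [UniformSpace α]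
    [UniformSpace β] {f : α → β} {s : Set α} {t : Set β} (hf : UniformContinuousOn f s)
    (ht : IsComplete t) (hst : MapsTo f s t) {x : α} (hx : x ∈ closure s) :
    ∃ y ∈ t, Tendsto f (𝓝[s] x) (𝓝 y) := by
  have : (𝓝[s] x).NeBot := mem_closure_iff_nhdsWithin_neBot.1 hx
  exact ht _ ((cauchy_nhds.mono nhdsWithin_le_nhds).map_of_le hf inf_le_right)
    (le_principal_iff.2 (mem_map.2 (mem_of_superset self_mem_nhdsWithin hst)))

section LocalIsometry

variable {V M : Type*} [MetricSpace V] [MetricSpace M] {p : V → M}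

namespace IsLocalIsometry

lemma isLocalHomeomorph (hp : IsLocalIsometry p) : IsLocalHomeomorph p := by
  refine isLocalHomeomorph_iff_isOpenEmbedding_restrict.2 fun v ↦ ?_
  obtain ⟨U, hU, hvU, hpU, -, hdist⟩ := hp v
  have hisom : Isometry (U.domRestrict p) := .of_dist_eq fun a b ↦ hdist a a.2 b b.2
  exact ⟨U, hU.mem_nhds hvU, hisom.isEmbedding, by rwa [range_domRestrict]⟩

lemma eventually_dist_eq (hp : IsLocalIsometry p) (v : V) :
    ∀ᶠ w in 𝓝 v, dist (p v) (p w) = dist v w := by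
  obtain ⟨U, hU, hvU, -, -, hdist⟩ := hp v
  filter_upwards [hU.mem_nhds hvU] with w hw using hdist v hvU w hw

variable {E : Type*} [SeminormedAddCommGroup E] [NormedSpace ℝ E] {s : Set E}

lemma lipschitzWith_comp_iff (hp : IsLocalIsometry p) (hs : Convex ℝ s) {f : s → V}
    (hf : Continuous f) {K : ℝ≥0} : LipschitzWith K (p ∘ f) ↔ LipschitzWith K f := by
  have hdist (x : s) : ∀ᶠ z in 𝓝 x, dist (p (f x)) (p (f z)) = dist (f x) (f z) :=
    hf.tendsto x (hp.eventually_dist_eq (f x))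
  refine ⟨fun h ↦ ?_, fun h ↦ ?_⟩ <;>
    refine lipschitzWith_of_forall_eventually_dist_le hs fun x ↦ ?_ <;>
    filter_upwards [hdist x] with z hz
  · exact hz ▸ h.dist_le_mul x z
  · exact hz.trans_le (h.dist_le_mul x z)

end IsLocalIsometry

namespace IsPathLift

variable {γ : ℝ → M} {L : ℝ≥0} {v : V} {s t : ℝ} {Γ Γ' : ℝ → V}

lemma lipschitzOnWith (h : IsPathLift p γ v t Γ) (hp : IsLocalIsometry p)
    (hγ : LipschitzWith L γ) : LipschitzOnWith L Γ (Icc 0 t) := by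
  have hΓ : Continuous ((Icc 0 t).domRestrict Γ) :=
    continuousOn_iff_continuous_domRestrict.1 h.continuousOn
  have hcomp : p ∘ (Icc 0 t).domRestrict Γ = (Icc 0 t).domRestrict γ :=
    domRestrict_eq_domRestrict_iff.2 h.eqOn_comp
  rw [lipschitzOnWith_iff_restrict, ← hp.lipschitzWith_comp_iff (convex_Icc 0 t) hΓ, hcomp]
  exact lipschitzOnWith_iff_restrict.1 hγ.lipschitzOnWith

lemma dist_endpoint_le (h : IsPathLift p γ v s Γ) (h' : IsPathLift p γ v t Γ')
    (hp : IsLocalIsometry p) (hγ : LipschitzWith L γ) (hs : 0 ≤ s) (ht : 0 ≤ t) :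
    dist (Γ s) (Γ' t) ≤ L * dist s t := by
  wlog hst : s ≤ t generalizing s t Γ Γ'
  · rw [dist_comm, dist_comm s]
    exact this h' h ht hs (le_of_not_ge hst)
  have heq : EqOn Γ Γ' (Icc 0 s) :=
    h.eqOn (h'.mono hst) (T2Space.isSeparatedMap p) hp.isLocalHomeomorph.isLocallyInjective
  rw [heq (right_mem_Icc.2 hs)]
  exact (h'.lipschitzOnWith hp hγ).dist_le_mul s ⟨hs, hst⟩ t (right_mem_Icc.2 ht)

end IsPathLift

namespace IsLocalIsometry

variable {v : V} {L : ℝ≥0}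

lemma exists_isPathLift (hp : IsLocalIsometry p) {γ : ℝ → M} (hγ : LipschitzWith L γ) {T : ℝ}
    (hT : 0 ≤ T) (hcomplete : IsComplete (closedBall v (L * T))) (hγ0 : γ 0 = p v) :
    ∃ Γ, IsPathLift p γ v T Γ := by
  set A : Set ℝ := {t | ∃ Γ, IsPathLift p γ v t Γ}
  have h_zero : IsPathLift p γ v 0 fun _ ↦ v :=
    ⟨continuousOn_const, rfl, fun t ht ↦ by simp [le_antisymm ht.2 ht.1, hγ0]⟩
  set S := A ∩ Icc 0 T
  have : Nonempty V := ⟨v⟩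
  choose! Γ hΓ using fun t (ht : t ∈ A) ↦ ht
  have hlip : LipschitzOnWith L (fun t ↦ Γ t t) S := .of_dist_le_mul fun s hs t ht ↦
    (hΓ s hs.1).dist_endpoint_le (hΓ t ht.1) hp hγ hs.2.1 ht.2.1
  have hball : MapsTo (fun t ↦ Γ t t) S (closedBall v (L * T)) := fun t ht ↦
    calc dist (Γ t t) v ≤ L * dist t 0 :=
          (hΓ t ht.1).dist_endpoint_le h_zero hp hγ ht.2.1 le_rfl
      _ = L * t := by rw [Real.dist_0_eq_abs, abs_of_nonneg ht.2.1]
      _ ≤ L * T := by gcongr; exact ht.2.2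
  have hnhds (x : ℝ) (hx : x ∈ closure S) : A ∈ 𝓝 x := by
    obtain ⟨w, -, hw⟩ := exists_tendsto_nhdsWithin_of_uniformContinuousOn
      hlip.uniformContinuousOn hcomplete hball hx
    exact eventually_exists_isPathLift_of_tendsto_endpoint hp.isLocalHomeomorph hγ.continuous
      (fun t ht ↦ ht.2.1) (fun t ht ↦ hΓ t ht.1) hx hw
  have hclosed : IsClosed S := isClosed_of_closure_subset fun x hx ↦
    ⟨mem_of_mem_nhds (hnhds x hx), closure_minimal inter_subset_right isClosed_Icc hx⟩
  have hIcc : Icc 0 T ⊆ A := hclosed.Icc_subset_of_forall_mem_nhdsWithin ⟨_, h_zero⟩ fun x hx ↦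
    mem_nhdsWithin_of_mem_nhds
      (hnhds x (subset_closure ⟨hx.1, Ico_subset_Icc_self hx.2⟩))
  exact hIcc (right_mem_Icc.2 hT)

lemma exists_path_lift (hp : IsLocalIsometry p) {γ : unitInterval → M} (hγ : LipschitzWith L γ)
    (hcomplete : IsComplete (closedBall v L)) (hγ0 : γ 0 = p v) :
    ∃ Γ : C(unitInterval, V), Γ 0 = v ∧ ∀ t, p (Γ t) = γ t := by
  have hext : LipschitzWith L (IccExtend zero_le_one γ) := by
    simpa [IccExtend] using hγ.comp (LipschitzWith.projIcc zero_le_one)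
  obtain ⟨Γ, hΓ⟩ := hp.exists_isPathLift (v := v) hext zero_le_one (by simpa using hcomplete)
    (by simpa using hγ0)
  refine ⟨⟨_, continuousOn_iff_continuous_domRestrict.1 hΓ.continuousOn⟩, hΓ.map_zero,
    fun t ↦ ?_⟩
  simpa using hΓ.eqOn_comp t.2

end IsLocalIsometry

variable {E : Type*} [SeminormedAddCommGroup E] [NormedSpace ℝ E] {s : Set E}

lemma IsLocalIsometry.exists_convex_lift (hp : IsLocalIsometry p) (hs : Convex ℝ s) {v : V}
    {K : ℝ≥0} {σ : s → M} (hσ : LipschitzWith K σ) {y : s} (hy : σ y = p v)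
    (hcomplete : ∀ z, IsComplete (closedBall v (K * dist z y))) :
    ∃ σ' : C(s, V), σ' y = v ∧ ∀ z, p (σ' z) = σ z := by
  refine exists_lift_of_homotopyRel_const hp.isLocalHomeomorph (T2Space.isSeparatedMap p)
    (segmentContraction hs y) ⟨σ, hσ.continuous⟩ fun z ↦ ?_
  have hlip : LipschitzWith (K * nndist z y) fun t ↦ σ (segmentContraction hs y (t, z)) :=
    .of_dist_le_mul fun t u ↦
      calc _ ≤ K * dist (segmentContraction hs y (t, z)) (segmentContraction hs y (u, z)) :=
            hσ.dist_le_mul _ _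
        _ = K * dist z y * dist t u := by rw [dist_segmentContraction, dist_comm y]; ring
  exact hp.exists_path_lift hlip (hcomplete z) (by simpa using hy)

theorem localIsometry_simplex_lifting_general (hs : Convex ℝ s) (hp : IsLocalIsometry p)
    {xbar : V} {K : ℝ≥0} {σ : s → M} (hσ : LipschitzWith K σ) {y : s} (hy : σ y = p xbar)
    (hcomplete : ∀ z, IsComplete (closedBall xbar (K * dist z y))) :
    ∃ σ' : s → V,
      (Continuous σ' ∧ (∀ z, p (σ' z) = σ z) ∧ σ' y = xbar) ∧
      (∀ τ : s → V, (Continuous τ ∧ (∀ z, p (τ z) = σ z) ∧ τ y = xbar) → τ = σ') ∧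
      (∀ z, σ' z ∈ closedBall xbar (K * dist z y)) ∧
      ∀ K' : ℝ≥0, LipschitzWith K' σ' ↔ LipschitzWith K' σ := by
  obtain ⟨σ', hσ'y, hlift⟩ := hp.exists_convex_lift hs hσ hy hcomplete
  have hcomp : p ∘ σ' = σ := funext hlift
  have hlip (K' : ℝ≥0) : LipschitzWith K' σ' ↔ LipschitzWith K' σ := by
    rw [← hp.lipschitzWith_comp_iff hs σ'.continuous, hcomp]
  refine ⟨σ', ⟨σ'.continuous, hlift, hσ'y⟩, ?_, fun z ↦ ?_, hlip⟩
  · rintro τ ⟨hτ, hτlift, hτy⟩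
    have : PreconnectedSpace s := isPreconnected_iff_preconnectedSpace.1 hs.isPreconnected
    exact (T2Space.isSeparatedMap p).eq_of_comp_eq hp.isLocalHomeomorph.isLocallyInjective hτ
      σ'.continuous ((funext hτlift).trans hcomp.symm) y (hτy.trans hσ'y.symm)
  · simpa only [mem_closedBall, hσ'y] using ((hlip K).2 hσ).dist_le_mul z y

end LocalIsometry

lemma convex_stdSimplexE (k : ℕ) : Convex ℝ (stdSimplexE k) :=
  (convex_stdSimplex ℝ (Fin (k + 1))).linear_preimage
    (WithLp.linearEquiv 2 ℝ (Fin (k + 1) → ℝ)).toLinearMap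

lemma dist_le_sqrt_two_of_mem_stdSimplexE {k : ℕ} {x y : EuclideanSpace ℝ (Fin (k + 1))}
    (hx : x ∈ stdSimplexE k) (hy : y ∈ stdSimplexE k) : dist x y ≤ √2 := by
  rw [EuclideanSpace.dist_eq]
  gcongr
  have hcoord (i : Fin (k + 1)) : dist (x i) (y i) ^ 2 ≤ x i + y i := by
    have hxi : x i ∈ Icc 0 1 := mem_Icc_of_mem_stdSimplex hx i
    have hyi : y i ∈ Icc 0 1 := mem_Icc_of_mem_stdSimplex hy i
    rw [Real.dist_eq, sq_abs]
    nlinarith [hxi.1, hxi.2, hyi.1, hyi.2, mul_nonneg hxi.1 hyi.1]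
  calc ∑ i, dist (x i) (y i) ^ 2 ≤ ∑ i, (x i + y i) := Finset.sum_le_sum fun i _ ↦ hcoord i
    _ = 2 := by rw [Finset.sum_add_distrib, hx.2, hy.2]; norm_num

/-- Lifting Lipschitz singular simplices along a local isometry `p : V → M`:
if all closed balls of radius `r < C` around `xbar` are complete and `σ : Δ^k → M` is
Lipschitz with `Lip(σ) < C/√2` and `σ y = p xbar`, then there is a unique continuous lift
`σ'` of `σ` with `σ' y = xbar`; moreover `σ'` has image in `B(xbar, C)` and the same
Lipschitz constant as `σ` (the same constants `K` work for `σ'` as for `σ`). -/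
theorem localIsometry_simplex_lifting
    {V M : Type*} [MetricSpace V] [MetricSpace M] (k : ℕ)
    (p : V → M) (hp : IsLocalIsometry p) (xbar : V) (C : ℝ) (hC : 0 < C)
    (hcomplete : ∀ r : ℝ, r < C → IsComplete (Metric.closedBall xbar r))
    (σ : stdSimplexE k → M)
    (hσ : ∃ K : ℝ≥0, LipschitzWith K σ ∧ (K : ℝ) < C / Real.sqrt 2)
    (y : stdSimplexE k) (hy : σ y = p xbar) :
    ∃ σ' : stdSimplexE k → V,
      (Continuous σ' ∧ (∀ z, p (σ' z) = σ z) ∧ σ' y = xbar) ∧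
      (∀ τ : stdSimplexE k → V,
        (Continuous τ ∧ (∀ z, p (τ z) = σ z) ∧ τ y = xbar) → τ = σ') ∧
      (∀ z, σ' z ∈ Metric.ball xbar C) ∧
      ∀ K : ℝ≥0, LipschitzWith K σ' ↔ LipschitzWith K σ := by
  obtain ⟨K, hK, hKC⟩ := hσ
  have hradius (z : stdSimplexE k) : K * dist z y < C :=
    calc K * dist z y ≤ K * √2 := by
          gcongr; exact dist_le_sqrt_two_of_mem_stdSimplexE z.2 y.2
      _ < C := (lt_div_iff₀ (by positivity)).1 hKC
  obtain ⟨σ', hlift, hunique, hball, hlip⟩ := localIsometry_simplex_lifting_general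
    (convex_stdSimplexE k) hp hK hy fun z ↦ hcomplete _ (hradius z)
  exact ⟨σ', hlift, hunique, fun z ↦ closedBall_subset_ball (hradius z) (hball z), hlip⟩
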